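/- Cut elimination for GL: the context-sharing cut rule (from Γ{A} and Γ{A⊥} infer Γ{·}) is admissible in the cut-free nested sequent calculus for GL; every sequent provable with cuts is provable without cuts. -/

import Mathlib

/-- Formulas of GL in negation normal form. -/
inductive Formula : Type where
  | pos : ℕ → Formula
  | neg : ℕ → Formula
  | and : Formula → Formula → Formula
  | or  : Formula → Formula → Formula
  | box : Formula → Formula
  | dia : Formula → Formula
deriving DecidableEq

/-- Negation `A⊥` of a formula, via De Morgan duality. -/
def Formula.negate : Formula → Formula
  | .pos a => .neg a
  | .neg a => .pos a
  | .and A B => .or A.negate B.negate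
  | .or A B => .and A.negate B.negate
  | .box A => .dia A.negate
  | .dia A => .box A.negate

/-- An element of a nested sequent: a formula or a nested (bracketed) sequent. -/
inductive SeqElem : Type where
  | fml : Formula → SeqElem
  | nest : List SeqElem → SeqElem

/-- A nested sequent. -/
abbrev Sequent := List SeqElem

/-- Unary contexts: a nested sequent with a single hole. -/
inductive Ctx : Type where
  | hole : Sequent → Ctx
  | nest : Sequent → Ctx → Ctx

/-- Fill the hole of a context with a sequent. -/
def Ctx.fill : Ctx → Sequent → Sequent
  | .hole Δ, Γ => Δ ++ Γ
  | .nest Δ c, Γ => .nest (c.fill Γ) :: Δ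

/-- Depth of a context: number of brackets surrounding the hole. -/
def Ctx.depth : Ctx → ℕ
  | .hole _ => 0
  | .nest _ c => c.depth + 1

/-- Equivalence of nested sequents up to (deep) exchange. -/
inductive SeqEquiv : Sequent → Sequent → Prop where
  | nil : SeqEquiv [] []
  | cons {e : SeqElem} {Γ Δ : Sequent} : SeqEquiv Γ Δ → SeqEquiv (e :: Γ) (e :: Δ)
  | consNest {Γ' Δ' Γ Δ : Sequent} :
      SeqEquiv Γ' Δ' → SeqEquiv Γ Δ → SeqEquiv (.nest Γ' :: Γ) (.nest Δ' :: Δ)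
  | swap (a b : SeqElem) (Γ : Sequent) : SeqEquiv (a :: b :: Γ) (b :: a :: Γ)
  | trans {Γ Δ Θ : Sequent} : SeqEquiv Γ Δ → SeqEquiv Δ Θ → SeqEquiv Γ Θ

/-- `DerivH n Γ`: `Γ` has a cut-free derivation of height at most `n`. -/
inductive DerivH : ℕ → Sequent → Prop where
  | id (n : ℕ) (c : Ctx) (a : ℕ) :
      DerivH n (c.fill [.fml (.pos a), .fml (.neg a)])
  | and {n : ℕ} {c : Ctx} {A B : Formula} :
      DerivH n (c.fill [.fml A]) → DerivH n (c.fill [.fml B]) →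
      DerivH (n + 1) (c.fill [.fml (.and A B)])
  | or {n : ℕ} {c : Ctx} {A B : Formula} :
      DerivH n (c.fill [.fml A, .fml B]) →
      DerivH (n + 1) (c.fill [.fml (.or A B)])
  | box {n : ℕ} {c : Ctx} {A : Formula} :
      DerivH n (c.fill [.nest [.fml (.dia A.negate), .fml A]]) →
      DerivH (n + 1) (c.fill [.fml (.box A)])
  | dia {n : ℕ} (c d : Ctx) {A : Formula} :
      0 < d.depth →
      DerivH n (c.fill (d.fill [.fml A] ++ [.fml (.dia A)])) →
      DerivH (n + 1) (c.fill (d.fill [] ++ [.fml (.dia A)]))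
  | exch {n : ℕ} {Γ Δ : Sequent} : SeqEquiv Γ Δ → DerivH n Γ → DerivH n Δ
  | up {n : ℕ} {Γ : Sequent} : DerivH n Γ → DerivH (n + 1) Γ

/-- Derivability where cut is permitted on formulas satisfying `P`. -/
inductive DerivWith (P : Formula → Prop) : Sequent → Prop where
  | id (c : Ctx) (a : ℕ) :
      DerivWith P (c.fill [.fml (.pos a), .fml (.neg a)])
  | and {c : Ctx} {A B : Formula} :
      DerivWith P (c.fill [.fml A]) → DerivWith P (c.fill [.fml B]) →
      DerivWith P (c.fill [.fml (.and A B)])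
  | or {c : Ctx} {A B : Formula} :
      DerivWith P (c.fill [.fml A, .fml B]) →
      DerivWith P (c.fill [.fml (.or A B)])
  | box {c : Ctx} {A : Formula} :
      DerivWith P (c.fill [.nest [.fml (.dia A.negate), .fml A]]) →
      DerivWith P (c.fill [.fml (.box A)])
  | dia (c d : Ctx) {A : Formula} :
      0 < d.depth →
      DerivWith P (c.fill (d.fill [.fml A] ++ [.fml (.dia A)])) →
      DerivWith P (c.fill (d.fill [] ++ [.fml (.dia A)]))
  | cut {c : Ctx} {A : Formula} : P A →
      DerivWith P (c.fill [.fml A]) → DerivWith P (c.fill [.fml A.negate]) →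
      DerivWith P (c.fill [])
  | exch {Γ Δ : Sequent} : SeqEquiv Γ Δ → DerivWith P Γ → DerivWith P Δ

/-- Cut-free derivability. -/
abbrev Deriv : Sequent → Prop := DerivWith (fun _ => False)

/-! ### Exchange and derived rules -/

theorem SeqEquiv.refl : ∀ Γ : Sequent, SeqEquiv Γ Γ
  | [] => .nil
  | _ :: Γ => .cons (SeqEquiv.refl Γ)

theorem SeqEquiv.of_perm {Γ Δ : Sequent} (h : Γ.Perm Δ) : SeqEquiv Γ Δ := by
  induction h with
  | nil => exact .nil
  | cons _ _ ih => exact .cons ih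
  | swap a b Γ => exact .swap b a Γ
  | trans _ _ ih₁ ih₂ => exact .trans ih₁ ih₂

theorem SeqEquiv.append_left (Θ : Sequent) {Γ Δ : Sequent} (h : SeqEquiv Γ Δ) :
    SeqEquiv (Θ ++ Γ) (Θ ++ Δ) := by
  induction Θ with
  | nil => exact h
  | cons _ _ ih => exact .cons ih

theorem SeqEquiv.fill (c : Ctx) {Γ Δ : Sequent} (h : SeqEquiv Γ Δ) :
    SeqEquiv (c.fill Γ) (c.fill Δ) := by
  induction c with
  | hole Θ => exact h.append_left Θ
  | nest Θ c ih => exact .consNest ih (.refl Θ)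

/-- Add formulas next to the hole of a context. -/
def Ctx.extend : Ctx → Sequent → Ctx
  | .hole Δ, Γ => .hole (Δ ++ Γ)
  | .nest Δ c, Γ => .nest Δ (c.extend Γ)

theorem Ctx.fill_extend (c : Ctx) (Γ X : Sequent) :
    (c.extend Γ).fill X = c.fill (Γ ++ X) := by
  induction c with
  | hole Δ => simp [Ctx.extend, Ctx.fill]
  | nest Δ c ih => simp [Ctx.extend, Ctx.fill, ih]

/-- Move the hole of a context into a new bracket, leaving `Γ` beside that bracket. -/
def Ctx.push : Ctx → Sequent → Ctx
  | .hole Δ, Γ => .nest (Δ ++ Γ) (.hole [])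
  | .nest Δ c, Γ => .nest Δ (c.push Γ)

theorem Ctx.fill_push (c : Ctx) (Γ X : Sequent) :
    SeqEquiv ((c.push Γ).fill X) (c.fill (.nest X :: Γ)) := by
  induction c with
  | hole Δ =>
    exact .of_perm (by simpa [Ctx.push, Ctx.fill] using List.perm_middle.symm)
  | nest Δ c ih => exact .consNest ih (.refl Δ)

theorem Ctx.fill_push_symm (c : Ctx) (Γ X : Sequent) :
    SeqEquiv (c.fill (.nest X :: Γ)) ((c.push Γ).fill X) := by
  induction c with
  | hole Δ =>
    exact .of_perm (by simp [Ctx.push, Ctx.fill])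
  | nest Δ c ih => exact .consNest ih (.refl Δ)

namespace DerivWith

variable {P : Formula → Prop}

theorem perm {c : Ctx} {Γ Δ : Sequent} (h : Γ.Perm Δ) (hd : DerivWith P (c.fill Γ)) :
    DerivWith P (c.fill Δ) :=
  .exch (.fill c (.of_perm h)) hd

theorem to_extend {c : Ctx} {Γ X : Sequent} (h : DerivWith P (c.fill (X ++ Γ))) :
    DerivWith P ((c.extend Γ).fill X) := by
  rw [Ctx.fill_extend]
  exact h.perm List.perm_append_comm

theorem of_extend {c : Ctx} {Γ X : Sequent} (h : DerivWith P ((c.extend Γ).fill X)) :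
    DerivWith P (c.fill (X ++ Γ)) := by
  rw [Ctx.fill_extend] at h
  exact h.perm List.perm_append_comm

theorem and_cons {c : Ctx} {A B : Formula} {Γ : Sequent}
    (hA : DerivWith P (c.fill (.fml A :: Γ))) (hB : DerivWith P (c.fill (.fml B :: Γ))) :
    DerivWith P (c.fill (.fml (.and A B) :: Γ)) :=
  of_extend (X := [_]) (.and (to_extend (X := [_]) hA) (to_extend (X := [_]) hB))

theorem or_cons {c : Ctx} {A B : Formula} {Γ : Sequent}
    (h : DerivWith P (c.fill (.fml A :: .fml B :: Γ))) :
    DerivWith P (c.fill (.fml (.or A B) :: Γ)) :=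
  of_extend (X := [_]) (.or (to_extend (X := [_, _]) h))

theorem box_cons {c : Ctx} {A : Formula} {Γ : Sequent}
    (h : DerivWith P (c.fill (.nest [.fml (.dia A.negate), .fml A] :: Γ))) :
    DerivWith P (c.fill (.fml (.box A) :: Γ)) :=
  of_extend (X := [_]) (.box (to_extend (X := [_]) h))

theorem dia_mem {c d : Ctx} {A : Formula} {Γ X : Sequent} (hA : .fml (.dia A) ∈ Γ)
    (h : DerivWith P (c.fill (.nest (d.fill (.fml A :: X)) :: Γ))) :
    DerivWith P (c.fill (.nest (d.fill X) :: Γ)) := by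
  obtain ⟨s, t, rfl⟩ := List.append_of_mem hA
  have key : ∀ Y : Sequent,
      ((SeqElem.nest Y :: (s ++ t)) ++ [SeqElem.fml (.dia A)]).Perm
        (.nest Y :: (s ++ SeqElem.fml (.dia A) :: t)) := fun Y => by
    refine List.Perm.cons _ ?_
    exact (List.perm_append_singleton _ _).trans List.perm_middle.symm
  have h₁ : DerivWith P
      (c.fill ((Ctx.nest (s ++ t) (d.extend X)).fill [.fml A] ++ [.fml (.dia A)])) := by
    refine DerivWith.perm (key _).symm (.exch (.fill c (.consNest ?_ (.refl _))) h)
    rw [Ctx.fill_extend]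
    exact .fill d (.of_perm (List.perm_append_singleton _ _).symm)
  have h₂ := DerivWith.dia c (.nest (s ++ t) (d.extend X)) (by simp [Ctx.depth]) h₁
  have h₃ := DerivWith.perm (key _) h₂
  rwa [Ctx.fill_extend, List.append_nil] at h₃

theorem identity (A : Formula) : ∀ (c : Ctx) (Γ : Sequent),
    DerivWith P (c.fill (.fml A :: .fml A.negate :: Γ)) := by
  induction A with
  | pos a => exact fun c Γ => of_extend (X := [_, _]) (.id _ a)
  | neg a => exact fun c Γ => (of_extend (X := [_, _]) (.id _ a)).perm (.swap _ _ _)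
  | and A B ihA ihB =>
    intro c Γ
    refine perm (.swap _ _ _) (or_cons (perm (.trans (.swap _ _ _) (.cons _ (.swap _ _ _)))
      (and_cons (ihA c _) (perm ?_ (ihB c (.fml A.negate :: Γ))))))
    exact .cons _ (.swap _ _ _)
  | or A B ihA ihB =>
    intro c Γ
    refine or_cons (perm (.trans (.swap _ _ _) (.cons _ (.swap _ _ _)))
      (and_cons (A := A.negate) (B := B.negate) (perm (.swap _ _ _) (ihA c (.fml B :: Γ)))
        (perm ?_ (ihB c (.fml A :: Γ)))))
    exact .trans (.swap _ _ _) (.cons _ (.swap _ _ _))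
  | box A ih =>
    intro c Γ
    refine box_cons (dia_mem (d := .hole []) (A := A.negate) (by simp [Formula.negate]) ?_)
    refine .exch (Ctx.fill_push c _ _) (perm (Γ := [.fml A, .fml A.negate, .fml (.dia A.negate)])
      ?_ (ih _ _))
    exact .trans (.swap _ _ _) (.cons _ (.swap _ _ _))
  | dia A ih =>
    intro c Γ
    refine perm (.swap _ _ _) (box_cons
      (dia_mem (d := .hole []) (A := A) (by simp) ?_))
    refine .exch (Ctx.fill_push c _ _)
      (perm (Γ := [.fml A, .fml A.negate, .fml (.dia A.negate.negate)]) ?_ (ih _ _))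
    exact .cons _ (.swap _ _ _)

end DerivWith

/-! ### Semantics -/

/-- Worlds of well-founded tree models: a valuation together with a family of successors. -/
inductive World : Type 1 where
  | node (v : ℕ → Prop) (ι : Type) (f : ι → World) : World

/-- The valuation at a world. -/
def World.val : World → ℕ → Prop
  | .node v _ _ => v

/-- `Below u w`: `u` is a proper descendant of `w`. -/
inductive Below : World → World → Prop where
  | child {v : ℕ → Prop} {ι : Type} {f : ι → World} (i : ι) : Below (f i) (.node v ι f)
  | step {v : ℕ → Prop} {ι : Type} {f : ι → World} {u : World} (i : ι) :
      Below u (f i) → Below u (.node v ι f)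

theorem Below.trans {t u w : World} (h₁ : Below t u) (h₂ : Below u w) : Below t w := by
  induction h₂ with
  | child i => exact .step i h₁
  | step i _ ih => exact .step i (ih h₁)

theorem Below.wf : WellFounded Below := by
  refine ⟨fun w => ?_⟩
  induction w with
  | node v ι f ih =>
    refine ⟨_, fun u hu => ?_⟩
    cases hu with
    | child i => exact ih i
    | step i h => exact (ih i).inv h

/-- Truth of a formula at a world. -/
def Formula.sat : Formula → World → Prop
  | .pos a, w => w.val a
  | .neg a, w => ¬ w.val a
  | .and A B, w => A.sat w ∧ B.sat w
  | .or A B, w => A.sat w ∨ B.sat w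
  | .box A, w => ∀ u, Below u w → A.sat u
  | .dia A, w => ∃ u, Below u w ∧ A.sat u

theorem Formula.sat_negate (A : Formula) (w : World) : A.negate.sat w ↔ ¬ A.sat w := by
  induction A generalizing w with
  | pos a => simp [negate, sat]
  | neg a => simp [negate, sat]
  | and A B ihA ihB => simp only [negate, sat, ihA, ihB]; tauto
  | or A B ihA ihB => simp only [negate, sat, ihA, ihB]; tauto
  | box A ih => simp [negate, sat, ih]
  | dia A ih => simp [negate, sat, ih]

theorem Formula.negate_negate (A : Formula) : A.negate.negate = A := by
  induction A <;> simp_all [negate]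

mutual
/-- Truth of a sequent element at a world; brackets are read as boxes. -/
def SeqElem.holds : SeqElem → World → Prop
  | .fml A, w => A.sat w
  | .nest Γ, w => ∀ u, Below u w → Sequent.holds Γ u
/-- Truth of a nested sequent at a world. -/
def Sequent.holds : List SeqElem → World → Prop
  | [], _ => False
  | e :: Γ, w => e.holds w ∨ Sequent.holds Γ w
end

theorem Sequent.holds_iff (Γ : Sequent) (w : World) :
    Sequent.holds Γ w ↔ ∃ e ∈ Γ, e.holds w := by
  induction Γ with
  | nil => simp [Sequent.holds]
  | cons e Γ ih => simp [Sequent.holds, ih]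

theorem Sequent.holds_append (Γ Δ : Sequent) (w : World) :
    Sequent.holds (Γ ++ Δ) w ↔ Sequent.holds Γ w ∨ Sequent.holds Δ w := by
  simp only [Sequent.holds_iff, List.mem_append, or_and_right, exists_or]

theorem SeqEquiv.holds_iff {Γ Δ : Sequent} (h : SeqEquiv Γ Δ) (w : World) :
    Sequent.holds Γ w ↔ Sequent.holds Δ w := by
  induction h generalizing w with
  | nil => rfl
  | cons _ ih => simp [Sequent.holds, ih]
  | consNest _ _ ih₁ ih₂ => simp [Sequent.holds, SeqElem.holds, ih₁, ih₂]
  | swap a b Γ => simp only [Sequent.holds]; tauto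
  | trans _ _ ih₁ ih₂ => exact (ih₁ w).trans (ih₂ w)

theorem Ctx.holds_fill_of_holds {c : Ctx} {X : Sequent} (h : ∀ w, Sequent.holds X w) (w : World) :
    Sequent.holds (c.fill X) w := by
  induction c generalizing w with
  | hole Δ => exact (Sequent.holds_append ..).2 (.inr (h w))
  | nest Δ c ih => exact .inl fun u _ => ih u

theorem Ctx.holds_fill_of_imp {c : Ctx} {X Y Z : Sequent}
    (h : ∀ w, Sequent.holds X w → Sequent.holds Y w → Sequent.holds Z w) (w : World)
    (hX : Sequent.holds (c.fill X) w) (hY : Sequent.holds (c.fill Y) w) :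
    Sequent.holds (c.fill Z) w := by
  induction c generalizing w with
  | hole Δ =>
    simp only [Ctx.fill, Sequent.holds_append] at *
    have := h w
    tauto
  | nest Δ c ih =>
    simp only [Ctx.fill, Sequent.holds, SeqElem.holds] at *
    rcases hX with hX | hX
    · rcases hY with hY | hY
      · exact .inl fun u hu => ih u (hX u hu) (hY u hu)
      · exact .inr hY
    · exact .inr hX

theorem Ctx.holds_fill_nil {d : Ctx} {A : Formula} {w : World} (hw : ¬ A.sat w)
    (hA : ∀ u, Below u w → ¬ A.sat u) (h : Sequent.holds (d.fill [.fml A]) w) :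
    Sequent.holds (d.fill []) w := by
  induction d generalizing w with
  | hole Δ =>
    simp only [Ctx.fill, Sequent.holds_append, Sequent.holds, SeqElem.holds] at *
    tauto
  | nest Δ d ih =>
    simp only [Ctx.fill, Sequent.holds, SeqElem.holds] at *
    exact h.imp_left fun h u hu => ih (hA u hu) (fun t ht => hA t (ht.trans hu)) (h u hu)

theorem DerivWith.sound {P : Formula → Prop} {Γ : Sequent} (h : DerivWith P Γ) (w : World) :
    Sequent.holds Γ w := by
  induction h generalizing w with
  | id c a =>
    exact Ctx.holds_fill_of_holds (fun w => by
      simp only [Sequent.holds, SeqElem.holds, Formula.sat]; tauto) w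
  | and _ _ ih₁ ih₂ =>
    exact Ctx.holds_fill_of_imp (fun w => by
      simp only [Sequent.holds, SeqElem.holds, Formula.sat]; tauto) w (ih₁ w) (ih₂ w)
  | or _ ih =>
    exact Ctx.holds_fill_of_imp (fun w => by
      simp only [Sequent.holds, SeqElem.holds, Formula.sat]; tauto) w (ih w) (ih w)
  | @box c A _ ih =>
    refine Ctx.holds_fill_of_imp (fun w h _ => ?_) w (ih w) (ih w)
    simp only [Sequent.holds, SeqElem.holds, Formula.sat, or_false, Formula.sat_negate] at *
    intro u
    induction u using Below.wf.induction with
    | _ u ihu =>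
      intro hu
      rcases h u hu with ⟨t, ht, hn⟩ | h
      · exact absurd (ihu t ht (ht.trans hu)) hn
      · exact h
  | @dia c d A hd _ ih =>
    refine Ctx.holds_fill_of_imp (fun w h _ => ?_) w (ih w) (ih w)
    rw [Sequent.holds_append] at *
    by_cases hA : Sequent.holds [.fml (.dia A)] w
    · exact .inr hA
    refine .inl ?_
    replace h := h.resolve_right hA
    simp only [Sequent.holds, SeqElem.holds, Formula.sat, or_false, not_exists, not_and] at hA
    cases d with
    | hole Δ => simp [Ctx.depth] at hd
    | nest Δ d =>
      simp only [Ctx.fill, Sequent.holds, SeqElem.holds] at *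
      exact h.imp_left fun h u hu =>
        Ctx.holds_fill_nil (hA u hu) (fun t ht => hA t (ht.trans hu)) (h u hu)
  | cut _ _ _ ih₁ ih₂ =>
    exact Ctx.holds_fill_of_imp (fun w => by
      simp only [Sequent.holds, SeqElem.holds, Formula.sat_negate]; tauto) w (ih₁ w) (ih₂ w)
  | exch h _ ih => exact (h.holds_iff w).1 (ih w)

/-! ### Finite closures and measures -/

/-- Subformulas of a formula and their negations. -/
def Formula.closure : Formula → Finset Formula
  | .pos a => {.pos a, .neg a}
  | .neg a => {.pos a, .neg a}
  | .and A B => {.and A B, .or A.negate B.negate} ∪ (A.closure ∪ B.closure)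
  | .or A B => {.or A B, .and A.negate B.negate} ∪ (A.closure ∪ B.closure)
  | .box A => {.box A, .dia A.negate} ∪ A.closure
  | .dia A => {.dia A, .box A.negate} ∪ A.closure

/-- Sets of formulas closed under the formulas introduced by backward rule applications. -/
structure ClosedSet (U : Finset Formula) : Prop where
  and : ∀ {A B}, .and A B ∈ U → A ∈ U ∧ B ∈ U
  or : ∀ {A B}, .or A B ∈ U → A ∈ U ∧ B ∈ U
  box : ∀ {A}, .box A ∈ U → A ∈ U ∧ .dia A.negate ∈ U
  dia : ∀ {A}, .dia A ∈ U → A ∈ U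

theorem Formula.mem_closure (A : Formula) : A ∈ A.closure := by
  cases A <;> simp [closure]

theorem Formula.negate_mem_closure (A : Formula) : A.negate ∈ A.closure := by
  cases A <;> simp [closure, negate]

theorem Formula.closedSet_closure (A : Formula) : ClosedSet A.closure := by
  induction A with
  | pos a => constructor <;> simp [closure]
  | neg a => constructor <;> simp [closure]
  | and A B ihA ihB =>
    have := @ihA.and; have := @ihA.or; have := @ihA.box; have := @ihA.dia
    have := @ihB.and; have := @ihB.or; have := @ihB.box; have := @ihB.dia
    have := A.mem_closure; have := A.negate_mem_closure
    have := B.mem_closure; have := B.negate_mem_closure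
    constructor <;> simp only [closure, Finset.mem_union, Finset.mem_insert,
      Finset.mem_singleton] <;> grind
  | or A B ihA ihB =>
    have := @ihA.and; have := @ihA.or; have := @ihA.box; have := @ihA.dia
    have := @ihB.and; have := @ihB.or; have := @ihB.box; have := @ihB.dia
    have := A.mem_closure; have := A.negate_mem_closure
    have := B.mem_closure; have := B.negate_mem_closure
    constructor <;> simp only [closure, Finset.mem_union, Finset.mem_insert,
      Finset.mem_singleton] <;> grind
  | box A ihA =>
    have := @ihA.and; have := @ihA.or; have := @ihA.box; have := @ihA.dia
    have := A.mem_closure; have := A.negate_mem_closure; have := A.negate_negate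
    constructor <;> simp only [closure, Finset.mem_union, Finset.mem_insert,
      Finset.mem_singleton] <;> grind
  | dia A ihA =>
    have := @ihA.and; have := @ihA.or; have := @ihA.box; have := @ihA.dia
    have := A.mem_closure; have := A.negate_mem_closure; have := A.negate_negate
    constructor <;> simp only [closure, Finset.mem_union, Finset.mem_insert,
      Finset.mem_singleton] <;> grind

theorem closedSet_biUnion_closure (S : Finset Formula) :
    ClosedSet (S.biUnion Formula.closure) := by
  constructor <;> simp only [Finset.mem_biUnion]
  · rintro A B ⟨C, hC, h⟩
    exact ⟨⟨C, hC, (C.closedSet_closure.and h).1⟩, C, hC, (C.closedSet_closure.and h).2⟩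
  · rintro A B ⟨C, hC, h⟩
    exact ⟨⟨C, hC, (C.closedSet_closure.or h).1⟩, C, hC, (C.closedSet_closure.or h).2⟩
  · rintro A ⟨C, hC, h⟩
    exact ⟨⟨C, hC, (C.closedSet_closure.box h).1⟩, C, hC, (C.closedSet_closure.box h).2⟩
  · rintro A ⟨C, hC, h⟩
    exact ⟨C, hC, C.closedSet_closure.dia h⟩

mutual
/-- The formulas occurring in a sequent element, at any depth. -/
def SeqElem.formulas : SeqElem → Finset Formula
  | .fml A => {A}
  | .nest Γ => Sequent.formulas Γ
/-- The formulas occurring in a nested sequent, at any depth. -/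
def Sequent.formulas : List SeqElem → Finset Formula
  | [] => ∅
  | e :: Γ => e.formulas ∪ Sequent.formulas Γ
end

theorem Sequent.formulas_subset_iff {Γ : Sequent} {U : Finset Formula} :
    Sequent.formulas Γ ⊆ U ↔ ∀ e ∈ Γ, e.formulas ⊆ U := by
  induction Γ with
  | nil => simp [Sequent.formulas]
  | cons e Γ ih => simp [Sequent.formulas, Finset.union_subset_iff, ih]

mutual
/-- The number of brackets in a sequent element. -/
def SeqElem.brackets : SeqElem → ℕ
  | .fml _ => 0
  | .nest Γ => Sequent.brackets Γ + 1
/-- The number of brackets in a nested sequent. -/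
def Sequent.brackets : List SeqElem → ℕ
  | [] => 0
  | e :: Γ => e.brackets + Sequent.brackets Γ
end

theorem Sequent.brackets_append (Γ Δ : Sequent) :
    Sequent.brackets (Γ ++ Δ) = Sequent.brackets Γ + Sequent.brackets Δ := by
  induction Γ with
  | nil => simp [Sequent.brackets]
  | cons e Γ ih => simp [Sequent.brackets, ih, add_assoc]

theorem Sequent.brackets_map_fml (l : List Formula) :
    Sequent.brackets (l.map SeqElem.fml) = 0 := by
  induction l with
  | nil => rfl
  | cons A l ih => simp [Sequent.brackets, SeqElem.brackets, ih]

theorem SeqElem.brackets_le_of_mem {e : SeqElem} {Γ : Sequent} (h : e ∈ Γ) :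
    e.brackets ≤ Sequent.brackets Γ := by
  obtain ⟨s, t, rfl⟩ := List.append_of_mem h
  simp only [Sequent.brackets_append, Sequent.brackets]
  omega

/-- The propositional size of a formula. -/
def Formula.propSize : Formula → ℕ
  | .and A B => A.propSize + B.propSize + 1
  | .or A B => A.propSize + B.propSize + 1
  | _ => 0

/-- The propositional size of a sequent element; brackets do not count. -/
def SeqElem.propSize : SeqElem → ℕ
  | .fml A => A.propSize
  | .nest _ => 0

/-- The propositional size of the outermost level of a nested sequent. -/
def Sequent.propSize (Γ : Sequent) : ℕ := (Γ.map SeqElem.propSize).sum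

open Classical in
/-- The formulas of `U` that are neither in `D` nor below a diamond at the root of `Γ`. -/
noncomputable def freshDias (U D : Finset Formula) (Γ : Sequent) : Finset Formula :=
  U.filter fun A => A ∉ D ∧ .fml (.dia A) ∉ Γ

theorem mem_freshDias {U D : Finset Formula} {Γ : Sequent} {A : Formula} :
    A ∈ freshDias U D Γ ↔ A ∈ U ∧ A ∉ D ∧ .fml (.dia A) ∉ Γ := by
  simp [freshDias]

/-- The termination measure of backward proof search. -/
noncomputable def searchMeasure (U D : Finset Formula) (Γ : Sequent) : ℕ ×ₗ ℕ ×ₗ ℕ :=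
  toLex (Sequent.brackets Γ, toLex ((freshDias U D Γ).card, Γ.propSize))

/-- `A` may be used freely at and below the hole of `c`,
as is the case when `◇A` occurs above the hole. -/
def Available (c : Ctx) (A : Formula) : Prop :=
  ∀ (d : Ctx) (X : Sequent), Deriv (c.fill (d.fill (.fml A :: X))) → Deriv (c.fill (d.fill X))

theorem Available.push {c : Ctx} {A : Formula} (h : Available c A) (Γ : Sequent) :
    Available (c.push Γ) A := fun d X hd =>
  .exch (Ctx.fill_push_symm c Γ _) (h (.nest Γ d) X (.exch (Ctx.fill_push c Γ _) hd))

theorem Available.of_dia_mem {A : Formula} {Γ : Sequent} (h : .fml (.dia A) ∈ Γ) (c : Ctx) :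
    Available (c.push Γ) A := fun _ _ hd =>
  .exch (Ctx.fill_push_symm c Γ _) (.dia_mem h (.exch (Ctx.fill_push c Γ _) hd))

theorem Available.deriv_of_append {c : Ctx} {l : List Formula} (h : ∀ A ∈ l, Available c A)
    {Γ : Sequent} (hd : Deriv (c.fill (l.map .fml ++ Γ))) : Deriv (c.fill Γ) := by
  induction l with
  | nil => exact hd
  | cons A l ih =>
    exact ih (fun B hB => h B (.tail _ hB)) (h A (.head _) (.hole []) _ hd)

/-- `w` refutes `Γ` and all formulas of `D` fail at every proper descendant of `w`. -/
def Refutes (D : Finset Formula) (w : World) (Γ : Sequent) : Prop :=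
  ¬ Sequent.holds Γ w ∧ ∀ A ∈ D, ∀ u, Below u w → ¬ A.sat u

/-- Every underivable filling by a sequent that precedes `Γ` in the search order is refutable. -/
def RefutableBefore (U D : Finset Formula) (Γ : Sequent) : Prop :=
  ∀ (c : Ctx) (E : Finset Formula) (Δ : Sequent), searchMeasure U E Δ < searchMeasure U D Γ →
    Sequent.formulas Δ ⊆ U → E ⊆ U → (∀ A ∈ E, Available c A) → ¬ Deriv (c.fill Δ) →
    ∃ w, Refutes E w Δ

theorem searchMeasure_lt_of_propSize_lt {U D : Finset Formula} {Γ Δ : Sequent}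
    (hb : Sequent.brackets Δ = Sequent.brackets Γ)
    (hd : ∀ A, .fml (.dia A) ∈ Γ → .fml (.dia A) ∈ Δ) (hs : Δ.propSize < Γ.propSize) :
    searchMeasure U D Δ < searchMeasure U D Γ := by
  have hf : (freshDias U D Δ).card ≤ (freshDias U D Γ).card := by
    refine Finset.card_le_card fun A hA => ?_
    rw [mem_freshDias] at *
    exact ⟨hA.1, hA.2.1, fun h => hA.2.2 (hd A h)⟩
  simp only [searchMeasure, Prod.Lex.toLex_lt_toLex, hb]
  exact .inr ⟨trivial, hf.lt_or_eq.imp_right fun h => ⟨h, hs⟩⟩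

theorem searchMeasure_lt_of_brackets_lt {U D E : Finset Formula} {Γ Δ : Sequent}
    (h : Sequent.brackets Δ < Sequent.brackets Γ) :
    searchMeasure U E Δ < searchMeasure U D Γ := by
  simp only [searchMeasure, Prod.Lex.toLex_lt_toLex]
  exact .inl h

theorem searchMeasure_lt_of_freshDias_ssubset {U D E : Finset Formula} {Γ Δ : Sequent}
    (hb : Sequent.brackets Δ ≤ Sequent.brackets Γ) (h : freshDias U E Δ ⊂ freshDias U D Γ) :
    searchMeasure U E Δ < searchMeasure U D Γ := by
  have := Finset.card_lt_card h
  simp only [searchMeasure, Prod.Lex.toLex_lt_toLex]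
  omega

section Completeness

variable {U D : Finset Formula} {c : Ctx} {Γ : Sequent}

theorem RefutableBefore.and (hU : ClosedSet U) {A B : Formula} {s t : Sequent}
    (ih : RefutableBefore U D (s ++ .fml (.and A B) :: t))
    (hΓ : Sequent.formulas (s ++ .fml (.and A B) :: t) ⊆ U) (hD : D ⊆ U)
    (hav : ∀ A ∈ D, Available c A) (hn : ¬ Deriv (c.fill (s ++ .fml (.and A B) :: t))) :
    ∃ w, Refutes D w (s ++ .fml (.and A B) :: t) := by
  have key : ∀ C : Formula, C ∈ U → C.propSize < (Formula.and A B).propSize →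
      (∀ w, (Formula.and A B).sat w → C.sat w) → ¬ Deriv (c.fill (.fml C :: (s ++ t))) →
      ∃ w, Refutes D w (s ++ .fml (.and A B) :: t) := by
    intro C hC hs himp hnC
    refine (ih c D (.fml C :: (s ++ t)) ?_ ?_ hD hav hnC).imp fun w hw =>
      ⟨fun h => hw.1 ?_, hw.2⟩
    · refine searchMeasure_lt_of_propSize_lt ?_ ?_ ?_
      · simp [Sequent.brackets, Sequent.brackets_append, SeqElem.brackets]
      · simp
        tauto
      · simp [Sequent.propSize, SeqElem.propSize] at *
        omega
    · rw [Sequent.formulas_subset_iff] at *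
      simp only [List.mem_cons, List.mem_append] at *
      rintro e (rfl | h)
      · simpa [SeqElem.formulas] using hC
      · exact hΓ e (by tauto)
    · simp only [Sequent.holds, Sequent.holds_append, SeqElem.holds] at h ⊢
      have := himp w
      tauto
  have hAB : .and A B ∈ U := Sequent.formulas_subset_iff.1 hΓ (.fml (.and A B)) (by simp)
    (by simp [SeqElem.formulas])
  by_cases hA : Deriv (c.fill (.fml A :: (s ++ t)))
  · refine key B (hU.and hAB).2 (by simp [Formula.propSize]) (fun w h => h.2) fun hB => ?_
    exact hn (.perm List.perm_middle.symm (.and_cons hA hB))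
  · exact key A (hU.and hAB).1 (by simp [Formula.propSize]) (fun w h => h.1) hA

theorem RefutableBefore.or (hU : ClosedSet U) {A B : Formula} {s t : Sequent}
    (ih : RefutableBefore U D (s ++ .fml (.or A B) :: t))
    (hΓ : Sequent.formulas (s ++ .fml (.or A B) :: t) ⊆ U) (hD : D ⊆ U)
    (hav : ∀ A ∈ D, Available c A) (hn : ¬ Deriv (c.fill (s ++ .fml (.or A B) :: t))) :
    ∃ w, Refutes D w (s ++ .fml (.or A B) :: t) := by
  have hAB : .or A B ∈ U := Sequent.formulas_subset_iff.1 hΓ (.fml (.or A B)) (by simp)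
    (by simp [SeqElem.formulas])
  refine (ih c D (.fml A :: .fml B :: (s ++ t)) ?_ ?_ hD hav fun h =>
    hn (.perm List.perm_middle.symm (.or_cons h))).imp fun w hw => ⟨fun h => hw.1 ?_, hw.2⟩
  · refine searchMeasure_lt_of_propSize_lt ?_ ?_ ?_
    · simp [Sequent.brackets, Sequent.brackets_append, SeqElem.brackets]
    · simp
      tauto
    · simp [Sequent.propSize, SeqElem.propSize, Formula.propSize]
      omega
  · rw [Sequent.formulas_subset_iff] at *
    simp only [List.mem_cons, List.mem_append] at *
    rintro e (rfl | rfl | h)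
    · simpa [SeqElem.formulas] using (hU.or hAB).1
    · simpa [SeqElem.formulas] using (hU.or hAB).2
    · exact hΓ e (by tauto)
  · simp only [Sequent.holds, Sequent.holds_append, SeqElem.holds, Formula.sat] at h ⊢
    tauto

/-- Underivability passes to a bracket, which is refuted together with all available formulas. -/
theorem RefutableBefore.child {E : Finset Formula} {Δ N : Sequent}
    (ih : RefutableBefore U D Γ)
    (hm : searchMeasure U E (E.toList.map .fml ++ N) < searchMeasure U D Γ)
    (hN : Sequent.formulas N ⊆ U) (hE : E ⊆ U) (hav : ∀ A ∈ E, Available (c.push Δ) A)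
    (hn : ¬ Deriv (c.fill (.nest N :: Δ))) :
    ∃ w, ¬ Sequent.holds N w ∧ ∀ A ∈ E, ¬ A.sat w ∧ ∀ u, Below u w → ¬ A.sat u := by
  refine (ih (c.push Δ) E (E.toList.map .fml ++ N) hm ?_ hE hav fun h => hn
    (.exch (Ctx.fill_push c Δ N) (Available.deriv_of_append
      (fun A hA => hav A (Finset.mem_toList.1 hA)) h))).imp fun w ⟨hw, hwE⟩ => ?_
  · rw [Sequent.formulas_subset_iff] at *
    simp only [List.mem_append, List.mem_map, Finset.mem_toList]
    rintro e (⟨A, hA, rfl⟩ | h)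
    · simpa [SeqElem.formulas] using hE hA
    · exact hN e h
  · rw [Sequent.holds_append, not_or] at hw
    refine ⟨hw.2, fun A hA => ⟨fun h => hw.1 ?_, hwE A hA⟩⟩
    rw [Sequent.holds_iff]
    exact ⟨.fml A, by simpa using hA, h⟩

open Classical in
/-- The formulas available inside the brackets of `Γ`. -/
noncomputable def innerDias (U D : Finset Formula) (Γ : Sequent) : Finset Formula :=
  D ∪ U.filter fun A : Formula => SeqElem.fml (.dia A) ∈ Γ

theorem mem_innerDias {A : Formula} :
    A ∈ innerDias U D Γ ↔ A ∈ D ∨ A ∈ U ∧ .fml (.dia A) ∈ Γ := by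
  simp [innerDias]

theorem innerDias_subset (hD : D ⊆ U) : innerDias U D Γ ⊆ U :=
  fun _ hA => (mem_innerDias.1 hA).elim (fun h => hD h) And.left

theorem available_of_mem_innerDias (hav : ∀ A ∈ D, Available c A) {Δ : Sequent}
    (hΔ : ∀ A, .fml (.dia A) ∈ Γ → .fml (.dia A) ∈ Δ) {A : Formula}
    (hA : A ∈ innerDias U D Γ) : Available (c.push Δ) A := by
  rcases mem_innerDias.1 hA with hA | hA
  · exact (hav A hA).push Δ
  · exact .of_dia_mem (hΔ A hA.2) c

theorem RefutableBefore.nest (ih : RefutableBefore U D Γ) (hΓ : Sequent.formulas Γ ⊆ U)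
    (hD : D ⊆ U) (hav : ∀ A ∈ D, Available c A) (hn : ¬ Deriv (c.fill Γ)) {N : Sequent}
    (hN : .nest N ∈ Γ) :
    ∃ w, ¬ Sequent.holds N w ∧
      ∀ A ∈ innerDias U D Γ, ¬ A.sat w ∧ ∀ u, Below u w → ¬ A.sat u := by
  obtain ⟨s, t, hst⟩ := List.append_of_mem hN
  refine ih.child (Δ := s ++ t) (c := c) ?_ ?_ (innerDias_subset hD) (fun A hA =>
    available_of_mem_innerDias hav (fun B hB => ?_) hA) fun h => hn ?_
  · refine searchMeasure_lt_of_brackets_lt ?_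
    have := SeqElem.brackets_le_of_mem hN
    simp only [SeqElem.brackets, Sequent.brackets_append, Sequent.brackets_map_fml] at *
    omega
  · exact Sequent.formulas_subset_iff.1 hΓ _ hN
  · simpa [hst] using hB
  · rw [hst]
    exact .perm List.perm_middle.symm h

theorem RefutableBefore.box (hU : ClosedSet U) (ih : RefutableBefore U D Γ)
    (hΓ : Sequent.formulas Γ ⊆ U) (hD : D ⊆ U) (hav : ∀ A ∈ D, Available c A)
    (hn : ¬ Deriv (c.fill Γ)) {B : Formula} (hB : .fml (.box B) ∈ Γ) :
    ∃ w, ¬ B.sat w ∧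
      ∀ A ∈ innerDias U D Γ, ¬ A.sat w ∧ ∀ u, Below u w → ¬ A.sat u := by
  have hBU : .box B ∈ U := Sequent.formulas_subset_iff.1 hΓ _ hB (by simp [SeqElem.formulas])
  obtain ⟨s, t, hst⟩ := List.append_of_mem hB
  have hn' : ¬ Deriv (c.fill (.nest [.fml (.dia B.negate), .fml B] :: (s ++ t))) := fun h => by
    rw [hst] at hn
    exact hn (.perm List.perm_middle.symm (.box_cons h))
  have hav' : ∀ A ∈ innerDias U D Γ, Available (c.push (s ++ t)) A := fun A hA =>
    available_of_mem_innerDias hav (fun C hC => by simpa [hst] using hC) hA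
  have hfresh : B.negate ∉ innerDias U D Γ := fun h => hn' <| by
    refine .exch (Ctx.fill_push c _ _) (hav' _ h (.hole []) _ ?_)
    refine DerivWith.perm (Γ := [.fml B, .fml B.negate, .fml (.dia B.negate)]) ?_ (.identity B _ _)
    exact .trans (.swap _ _ _) (.cons _ (.swap _ _ _))
  refine (ih.child (N := [.fml (.dia B.negate), .fml B]) ?_ ?_ (innerDias_subset hD) hav'
    hn').imp fun w hw => ⟨fun h => hw.1 ?_, hw.2⟩
  · refine searchMeasure_lt_of_freshDias_ssubset ?_ ?_
    · simp [Sequent.brackets_append, Sequent.brackets_map_fml, Sequent.brackets, SeqElem.brackets]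
    · refine (Finset.ssubset_iff_of_subset fun A hA => ?_).2 ⟨B.negate, ?_, ?_⟩
      · rw [mem_freshDias, mem_innerDias] at *
        tauto
      · have := hU.dia (hU.box hBU).2
        rw [mem_freshDias]
        rw [mem_innerDias] at hfresh
        tauto
      · simp [mem_freshDias]
  · have := hU.box hBU
    simp [Sequent.formulas, SeqElem.formulas, Finset.insert_subset_iff, this]
  · simp [Sequent.holds, SeqElem.holds, h]

/-- Refuting worlds for the boxes and brackets of a propositionally decomposed sequent
are glued together under a new root. -/
theorem refutes_of_decomposed (hΓ : Sequent.formulas Γ ⊆ U) (hU : ClosedSet U)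
    (hn : ¬ Deriv (c.fill Γ))
    (hand : ∀ A B, .fml (.and A B) ∉ Γ) (hor : ∀ A B, .fml (.or A B) ∉ Γ)
    (hnest : ∀ N, .nest N ∈ Γ → ∃ w, ¬ Sequent.holds N w ∧
      ∀ A ∈ innerDias U D Γ, ¬ A.sat w ∧ ∀ u, Below u w → ¬ A.sat u)
    (hbox : ∀ B, .fml (.box B) ∈ Γ → ∃ w, ¬ B.sat w ∧
      ∀ A ∈ innerDias U D Γ, ¬ A.sat w ∧ ∀ u, Below u w → ¬ A.sat u) :
    ∃ w, Refutes D w Γ := by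
  choose f hf hfD using hnest
  choose g hg hgD using hbox
  obtain ⟨w, hw⟩ : ∃ w : World, w = .node (fun a => .fml (.neg a) ∈ Γ)
    ({N : Sequent // .nest N ∈ Γ} ⊕ {B : Formula // .fml (.box B) ∈ Γ})
    (Sum.elim (fun N => f N.1 N.2) (fun B => g B.1 B.2)) := ⟨_, rfl⟩
  have hbelow : ∀ A ∈ innerDias U D Γ, ∀ u, Below u w → ¬ A.sat u := by
    intro A hA u hu
    subst hw
    cases hu with
    | child i =>
      rcases i with N | B
      · exact (hfD N.1 N.2 A hA).1
      · exact (hgD B.1 B.2 A hA).1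
    | step i h =>
      rcases i with N | B
      · exact (hfD N.1 N.2 A hA).2 u h
      · exact (hgD B.1 B.2 A hA).2 u h
  refine ⟨w, fun h => ?_, fun A hA => hbelow A (mem_innerDias.2 (.inl hA))⟩
  subst hw
  obtain ⟨e, he, hw⟩ := (Sequent.holds_iff _ _).1 h
  match e with
  | .nest N =>
    have h := hw _ (.child (Sum.inl ⟨N, he⟩))
    exact hf N he h
  | .fml (.box B) =>
    have h := hw _ (.child (Sum.inr ⟨B, he⟩))
    exact hg B he h
  | .fml (.dia A) =>
    obtain ⟨u, hu, hA⟩ := hw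
    have hAU : .dia A ∈ U := Sequent.formulas_subset_iff.1 hΓ _ he (by simp [SeqElem.formulas])
    exact hbelow A (mem_innerDias.2 (.inr ⟨hU.dia hAU, he⟩)) u hu hA
  | .fml (.and A B) => exact hand A B he
  | .fml (.or A B) => exact hor A B he
  | .fml (.neg a) => exact hw he
  | .fml (.pos a) =>
    have hneg : .fml (.neg a) ∈ Γ := hw
    obtain ⟨s, t, rfl⟩ := List.append_of_mem he
    have hneg' : .fml (.neg a) ∈ s ++ t := by simpa using hneg
    obtain ⟨s', t', hst⟩ := List.append_of_mem hneg'
    refine hn (.perm ?_ (.identity (.pos a) c (s' ++ t')))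
    refine .trans (.cons _ ?_) List.perm_middle.symm
    rw [hst]
    exact List.perm_middle.symm

end Completeness

theorem exists_refutes {U : Finset Formula} (hU : ClosedSet U) (c : Ctx) (D : Finset Formula)
    (Γ : Sequent) (hΓ : Sequent.formulas Γ ⊆ U) (hD : D ⊆ U) (hav : ∀ A ∈ D, Available c A)
    (hn : ¬ Deriv (c.fill Γ)) : ∃ w, Refutes D w Γ := by
  induction hm : searchMeasure U D Γ using WellFoundedLT.induction generalizing c D Γ with
  | _ m ih' =>
  have ih : RefutableBefore U D Γ := fun c E Δ hlt h₁ h₂ h₃ h₄ =>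
    ih' _ (hm ▸ hlt) c E Δ h₁ h₂ h₃ h₄ rfl
  by_cases hand : ∃ A B, .fml (.and A B) ∈ Γ
  · obtain ⟨A, B, h⟩ := hand
    obtain ⟨s, t, rfl⟩ := List.append_of_mem h
    exact ih.and hU hΓ hD hav hn
  by_cases hor : ∃ A B, .fml (.or A B) ∈ Γ
  · obtain ⟨A, B, h⟩ := hor
    obtain ⟨s, t, rfl⟩ := List.append_of_mem h
    exact ih.or hU hΓ hD hav hn
  push Not at hand hor
  exact refutes_of_decomposed hΓ hU hn hand hor (fun N => ih.nest hΓ hD hav hn)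
    (fun B => ih.box hU hΓ hD hav hn)

/-- Completeness of the cut-free calculus for well-founded trees. -/
theorem deriv_of_valid {Γ : Sequent} (h : ∀ w, Sequent.holds Γ w) : Deriv Γ := by
  by_contra hn
  obtain ⟨w, hw, -⟩ := exists_refutes
    (closedSet_biUnion_closure (Sequent.formulas Γ)) (.hole []) ∅ Γ
    (fun A hA => Finset.mem_biUnion.2 ⟨A, hA, A.mem_closure⟩) (by simp) (by simp) hn
  exact hw (h w)

/-- cut elimination — everything provable with cuts is
provable without. -/
theorem cut_elimination (Γ : Sequent)
    (h : DerivWith (fun _ => True) Γ) : Deriv Γ := by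
  exact deriv_of_valid h.sound
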